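/- (Theorem 1, third part) The unbounded counter problem for nondeterministic counter machines — the set {M : M a nondeterministic counter machine (with at least 2 counters) that has an infinite computation in which counter v₀ is incremented infinitely often} — is Σ¹₁-hard: every Σ¹₁ subset of ℕ many-one reduces to it. -/

import Mathlib

/-!
Let `A` be Σ¹₁, given by a decidable relation `R` on inputs and finite sequences. Membership of `n`
in `A` is an infinite search for a function `f`: guess `f 0, f 1, …` one after the other, and reject
as soon as `R` refuses the sequence guessed so far. The state of this search is a single number,
encoding `n` together with the reversed list of guesses, and one step of it is a computable function
`extend R` of the next guess and the state, with value `0` for rejection and `s' + 1` for the new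
state `s'` (`exists_witness_iff`).

A counter machine performs this search in an infinite loop (`mainCode`). Each round guesses a
number by a nondeterministic loop of increments, applies `extend R` deterministically, gets stuck on
rejection, and otherwise increments `v₀`. A run may remain in the guessing loop forever, but then
`v₀` is incremented only finitely often. So the runs incrementing `v₀` infinitely often correspond
exactly to the functions `f` all of whose prefixes are accepted (`machine_spec`).

That counter machines can evaluate `extend R` is shown by compilation. Since the number of counters
may be arbitrarily large, the basis `Nat.Partrec'` of `n`-ary recursive functions, which involves no
pairing functions, can be implemented in a small structured language whose only loop is
repeat-until-zero (`computes_of_partrec'`); this kind of loop needs just one backward `branch`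
(`dreach_of_exec`). Every compiled configuration has a unique successor, hence an infinite run has
to follow the compiled code (`DReach.on_run`).

The input enters only through a block of `inc` instructions at the end of the program, so the code
of the machine is a computable function of `n` (`machine_code_computable`); codes are injective
(`CM.code_injective`), so that membership of the code in `UCset` speaks about this machine.
-/

/-- `A ⊆ ℕ` is Σ⁰₁ (recursively enumerable): `A` is the domain of a partial
computable function. -/
def Sigma01 (A : Set ℕ) : Prop :=
  ∃ f : ℕ →. ℕ, Nat.Partrec f ∧ ∀ n, n ∈ A ↔ (f n).Dom

/-- `A ⊆ ℕ` is Π⁰₁: its complement is Σ⁰₁. -/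
def Pi01 (A : Set ℕ) : Prop := Sigma01 Aᶜ

/-- `A ⊆ ℕ` is Σ⁰₂: `n ∈ A ↔ ∃ a, ∀ b, R n a b` for a decidable relation `R`. -/
def Sigma02 (A : Set ℕ) : Prop :=
  ∃ R : ℕ → ℕ → ℕ → Bool, Computable (fun p : ℕ × ℕ × ℕ => R p.1 p.2.1 p.2.2) ∧
    ∀ n, n ∈ A ↔ ∃ a, ∀ b, R n a b = true

/-- `A` many-one reduces to `B`: there is a total computable `f` with
`n ∈ A ↔ f n ∈ B` for all `n`. -/
def ManyOneRed (A B : Set ℕ) : Prop :=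
  ∃ f : ℕ → ℕ, Computable f ∧ ∀ n, n ∈ A ↔ f n ∈ B
/-- Instructions of nondeterministic counter machines. -/
inductive Instr where
  | halt : Instr
  | inc : ℕ → Instr
  | dec : ℕ → Instr
  | branch : ℕ → ℕ → ℕ → Instr
deriving DecidableEq

/-- A nondeterministic counter machine: a number of counters together with a
finite list of instructions `ℓ₀, …, ℓ_m`. -/
structure CM where
  numCounters : ℕ
  prog : List Instr

/-- Counters mentioned by an instruction. -/
def Instr.counters : Instr → List ℕ
  | .halt => []
  | .inc k => [k]
  | .dec k => [k]
  | .branch k _ _ => [k]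

/-- Well-formedness: instructions only mention the machine's counters, and the
instruction `halt` occurs exactly once in the program. -/
def CM.WellFormed (M : CM) : Prop :=
  (∀ i ∈ M.prog, ∀ k ∈ i.counters, k < M.numCounters) ∧
    M.prog.count Instr.halt = 1

/-- A configuration: current location and counter contents. -/
structure Config where
  loc : ℕ
  cnt : ℕ → ℕ

/-- The initial configuration: location `ℓ₀`, all counters equal to `0`. -/
def initConfig : Config := ⟨0, fun _ => 0⟩

/-- One nondeterministic computation step. `halt` has no successor, and
decrementing a zero counter is undefined (no successor). -/
def Step (M : CM) (c c' : Config) : Prop :=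
  match M.prog[c.loc]? with
  | none => False
  | some .halt => False
  | some (.inc k) => c' = ⟨c.loc + 1, Function.update c.cnt k (c.cnt k + 1)⟩
  | some (.dec k) => 0 < c.cnt k ∧ c' = ⟨c.loc + 1, Function.update c.cnt k (c.cnt k - 1)⟩
  | some (.branch k i j) =>
      (c.cnt k ≠ 0 ∧ (c' = ⟨i, c.cnt⟩ ∨ c' = ⟨j, c.cnt⟩)) ∨
        (c.cnt k = 0 ∧ c' = ⟨c.loc + 1, c.cnt⟩)

/-- `c` occurs at some point of some computation of `M`. -/
def Reaches (M : CM) (c : Config) : Prop :=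
  Relation.ReflTransGen (Step M) initConfig c

/-- Counter `v₀` exceeds `β` at some point of some computation of `M`. -/
def Overflows (M : CM) (β : ℕ) : Prop := ∃ c, Reaches M c ∧ β < c.cnt 0

/-- Some computation of `M` reaches the `halt` instruction. -/
def Halts (M : CM) : Prop := ∃ c, Reaches M c ∧ M.prog[c.loc]? = some Instr.halt

/-- An infinite computation of `M`. -/
def IsInfRun (M : CM) (ρ : ℕ → Config) : Prop :=
  ρ 0 = initConfig ∧ ∀ k, Step M (ρ k) (ρ (k + 1))

/-- A (finite or infinite) computation of `M`, presented as an infinite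
sequence that stutters forever once no step is possible. -/
def IsComp (M : CM) (ρ : ℕ → Config) : Prop :=
  ρ 0 = initConfig ∧
    ∀ k, Step M (ρ k) (ρ (k + 1)) ∨ ((¬ ∃ c, Step M (ρ k) c) ∧ ρ (k + 1) = ρ k)

/-- Effective code of an instruction. -/
def Instr.code : Instr → ℕ
  | .halt => Nat.pair 0 0
  | .inc k => Nat.pair 1 k
  | .dec k => Nat.pair 2 k
  | .branch k i j => Nat.pair 3 (Nat.pair k (Nat.pair i j))

/-- Effective code of a list of naturals. -/
def listCode : List ℕ → ℕ
  | [] => 0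
  | a :: l => Nat.pair a (listCode l) + 1

/-- A fixed effective encoding of counter machines as natural numbers. -/
def CM.code (M : CM) : ℕ :=
  Nat.pair M.numCounters (listCode (M.prog.map Instr.code))

/-- `A ⊆ ℕ` is Σ¹₁: `n ∈ A` iff some `f : ℕ → ℕ` has all its finite prefixes
accepted by a fixed decidable relation `R`. -/
def Sigma11 (A : Set ℕ) : Prop :=
  ∃ R : ℕ → List ℕ → Bool, Computable (fun p : ℕ × List ℕ => R p.1 p.2) ∧
    ∀ n, n ∈ A ↔ ∃ f : ℕ → ℕ, ∀ k, R n ((List.range (k + 1)).map f) = true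

/-- The unbounded counter problem: codes of well-formed machines `M` with at
least 2 counters having an infinite computation in which counter `v₀` is
incremented infinitely often. -/
def UCset : Set ℕ :=
  {n | ∃ M : CM, n = M.code ∧ M.WellFormed ∧ 2 ≤ M.numCounters ∧
    ∃ ρ : ℕ → Config, IsInfRun M ρ ∧
      ∀ m : ℕ, ∃ k, m ≤ k ∧ (ρ k).cnt 0 < (ρ (k + 1)).cnt 0}

/-! ### A small deterministic while language -/

/-- Structured deterministic programs over registers indexed by `ℕ`; `loop k c` repeats `c` until
`k` is zero, the test coming *after* each execution of the body. -/
inductive Cmd where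
  | inc : ℕ → Cmd
  | dec : ℕ → Cmd
  | seq : Cmd → Cmd → Cmd
  | loop : ℕ → Cmd → Cmd

/-- Big-step semantics of `Cmd`. Decrementing a zero register has no outcome. -/
inductive Exec : Cmd → (ℕ → ℕ) → (ℕ → ℕ) → Prop
  | inc (k σ) : Exec (.inc k) σ (Function.update σ k (σ k + 1))
  | dec (k σ) : 0 < σ k → Exec (.dec k) σ (Function.update σ k (σ k - 1))
  | seq {c d σ τ υ} : Exec c σ τ → Exec d τ υ → Exec (.seq c d) σ υ
  | loop_exit {k c σ τ} : Exec c σ τ → τ k = 0 → Exec (.loop k c) σ τ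
  | loop_again {k c σ τ υ} : Exec c σ τ → τ k ≠ 0 → Exec (.loop k c) τ υ → Exec (.loop k c) σ υ

/-- Replacing the final state by an equal one. -/
theorem Exec.congr {c : Cmd} {σ τ τ' : ℕ → ℕ} (h : Exec c σ τ) (e : τ = τ') : Exec c σ τ' :=
  e ▸ h

/-- Setting register `r` to zero; the initial increment makes the loop body executable. -/
def Cmd.zero (r : ℕ) : Cmd := .seq (.inc r) (.loop r (.dec r))

theorem exec_loop_dec (r : ℕ) : ∀ (n : ℕ) (σ : ℕ → ℕ), σ r = n + 1 →
    Exec (.loop r (.dec r)) σ (Function.update σ r 0) := by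
  intro n
  induction n with
  | zero =>
    intro σ h
    refine .loop_exit ((Exec.dec r σ (by omega)).congr ?_) (by simp)
    simp [h]
  | succ n ih =>
    intro σ h
    refine .loop_again (Exec.dec r σ (by omega)) (by simp [h]) ((ih _ (by simp [h])).congr ?_)
    simp

theorem exec_zero (r : ℕ) (σ : ℕ → ℕ) : Exec (Cmd.zero r) σ (Function.update σ r 0) :=
  (Exec.seq (Exec.inc r σ) (exec_loop_dec r (σ r) _ (by simp))).congr (by simp)

/-- `o := a`, using the auxiliary register `t`. Both loops run once more than the value of `a`
requires, which the increment before and the decrements after them compensate. -/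
def Cmd.copy (o a t : ℕ) : Cmd :=
  .seq (.zero o) <| .seq (.zero t) <| .seq (.inc a) <|
    .seq (.loop a (.seq (.dec a) (.seq (.inc o) (.inc t)))) <| .seq (.dec o) <|
      .seq (.loop t (.seq (.dec t) (.inc a))) (.dec a)

theorem exec_copy_loop₁ {o a t : ℕ} (hoa : o ≠ a) (hot : o ≠ t) (hat : a ≠ t) :
    ∀ (n : ℕ) (σ : ℕ → ℕ), σ a = n + 1 →
      Exec (.loop a (.seq (.dec a) (.seq (.inc o) (.inc t)))) σ
        (Function.update (Function.update (Function.update σ a 0) o (σ o + (n + 1)))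
          t (σ t + (n + 1))) := by
  intro n
  induction n with
  | zero =>
    intro σ h
    refine .loop_exit ((Exec.seq (.dec a σ (by omega)) (.seq (.inc o _) (.inc t _))).congr ?_) ?_
    · simp [h, hoa, hot.symm, hat.symm]
    · simp [hoa.symm, hat]
  | succ n ih =>
    intro σ h
    refine .loop_again (.seq (.dec a σ (by omega)) (.seq (.inc o _) (.inc t _))) ?_
      ((ih _ ?_).congr ?_)
    · simp [h, hoa.symm, hat]
    · simp [h, hoa.symm, hat]
    · funext r
      simp only [Function.update_apply]
      grind

theorem exec_copy_loop₂ {a t : ℕ} (hat : a ≠ t) :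
    ∀ (n : ℕ) (σ : ℕ → ℕ), σ t = n + 1 →
      Exec (.loop t (.seq (.dec t) (.inc a))) σ
        (Function.update (Function.update σ t 0) a (σ a + (n + 1))) := by
  intro n
  induction n with
  | zero =>
    intro σ h
    refine .loop_exit ((Exec.seq (.dec t σ (by omega)) (.inc a _)).congr ?_) ?_
    · simp [h, hat]
    · simp [hat.symm]
  | succ n ih =>
    intro σ h
    refine .loop_again (.seq (.dec t σ (by omega)) (.inc a _)) ?_ ((ih _ ?_).congr ?_)
    · simp [h, hat.symm]
    · simp [h, hat.symm]
    · funext r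
      simp only [Function.update_apply]
      grind

theorem exec_copy {o a t : ℕ} (hoa : o ≠ a) (hot : o ≠ t) (hat : a ≠ t) (σ : ℕ → ℕ) :
    Exec (Cmd.copy o a t) σ (Function.update (Function.update σ t 0) o (σ a)) := by
  refine (Exec.seq (exec_zero o σ) <| .seq (exec_zero t _) <| .seq (.inc a _) <|
    .seq (exec_copy_loop₁ hoa hot hat (σ a) _ ?_) <| .seq (.dec o _ ?_) <|
      .seq (exec_copy_loop₂ hat (σ a) _ ?_) (.dec a _ ?_)).congr ?_
  · simp [hoa.symm, hat]
  · simp [hoa, hot]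
  · simp [hot, hot.symm, hat.symm]
  · simp
  · funext r
    simp only [Function.update_apply]
    grind

/-! ### Recursive functions are computed by `Cmd` programs -/

/-- `f` is computed by `Cmd` programs, uniformly in the placement of the data: for all argument
registers `a`, result register `o` and bound `s` above them, some program puts `f` of the arguments
into `o` (whenever `f` is defined there) and changes no other register below `s`. Registers from
`s` on are scratch space with arbitrary initial contents. -/
def Computes {n : ℕ} (f : List.Vector ℕ n →. ℕ) : Prop :=
  ∀ (a : Fin n → ℕ) (o s : ℕ), (∀ i, a i < s) → o < s → (∀ i, a i ≠ o) →
    ∃ c : Cmd, ∀ (σ : ℕ → ℕ) (v : List.Vector ℕ n) (y : ℕ), (∀ i, σ (a i) = v.get i) → y ∈ f v →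
      ∃ τ, Exec c σ τ ∧ τ o = y ∧ ∀ r, r < s → r ≠ o → τ r = σ r

theorem computes_zero : Computes (n := 0) (fun _ => Part.some 0) := by
  intro a o s _ _ _
  refine ⟨Cmd.zero o, fun σ v y _ hy => ⟨_, exec_zero o σ, ?_, ?_⟩⟩
  · simpa using (Part.mem_some_iff.1 hy).symm
  · intro r _ hr; simp [hr]

theorem computes_get {n : ℕ} (i : Fin n) :
    Computes (fun v : List.Vector ℕ n => Part.some (v.get i)) := by
  intro a o s ha ho hao
  have := ha i
  refine ⟨Cmd.copy o (a i) s, fun σ v y hv hy => ⟨_, exec_copy (hao i).symm (by omega) (by omega) σ,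
    ?_, ?_⟩⟩
  · simpa [hv] using (Part.mem_some_iff.1 hy).symm
  · intro r hs hr
    simp [hr, hs.ne]

theorem computes_succ : Computes (n := 1) (fun v => Part.some v.head.succ) := by
  intro a o s ha ho hao
  have := ha 0
  refine ⟨.seq (Cmd.copy o (a 0) s) (.inc o), fun σ v y hv hy =>
    ⟨_, .seq (exec_copy (hao 0).symm (by omega) (by omega) σ) (.inc o _), ?_, ?_⟩⟩
  · have := hv 0
    rw [Part.mem_some_iff] at hy
    simp [this, hy, List.Vector.get_zero]
  · intro r hs hr
    simp [hr, hs.ne]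

theorem mem_mOfFn : ∀ {n : ℕ} (f : Fin n → Part ℕ) (w : List.Vector ℕ n),
    w ∈ List.Vector.mOfFn f → ∀ i, w.get i ∈ f i
  | 0, _, _, _, i => i.elim0
  | n + 1, f, w, h, i => by
    simp only [List.Vector.mOfFn, Part.bind_eq_bind, Part.mem_bind_iff, Part.pure_eq_some,
      Part.mem_some_iff] at h
    obtain ⟨x, hx, w', hw', rfl⟩ := h
    refine Fin.cases ?_ (fun j => ?_) i
    · simpa using hx
    · simpa using mem_mOfFn _ _ hw' j

/-- A program evaluating the first `j` of `n` functions of the same arguments into the consecutive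
registers `s, …, s + j - 1`. -/
theorem computes_family {m n : ℕ} {g : Fin n → List.Vector ℕ m →. ℕ} (hg : ∀ i, Computes (g i))
    (a : Fin m → ℕ) (s : ℕ) (ha : ∀ i, a i < s) (j : ℕ) (hj : j ≤ n) :
    ∃ c : Cmd, ∀ (σ : ℕ → ℕ) (v : List.Vector ℕ m) (w : List.Vector ℕ n),
      (∀ i, σ (a i) = v.get i) → (∀ i, w.get i ∈ g i v) →
      ∃ τ, Exec c σ τ ∧ (∀ i : Fin n, i.1 < j → τ (s + i) = w.get i) ∧ ∀ r, r < s → τ r = σ r := by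
  induction j with
  | zero =>
    -- any program that leaves the registers below `s` alone will do
    exact ⟨.zero s, fun σ v w _ _ => ⟨_, exec_zero s σ, by simp, fun r hr => by simp [hr.ne]⟩⟩
  | succ j ih =>
    obtain ⟨c, hc⟩ := ih (by omega)
    obtain ⟨d, hd⟩ := hg ⟨j, by omega⟩ a (s + j) (s + n) (fun i => by have := ha i; omega)
      (by omega) (fun i => by have := ha i; omega)
    refine ⟨.seq c d, fun σ v w hv hw => ?_⟩
    obtain ⟨τ, h₁, h₂, h₃⟩ := hc σ v w hv hw
    obtain ⟨υ, k₁, k₂, k₃⟩ := hd τ v _ (fun i => by rw [h₃ _ (ha i), hv]) (hw _)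
    refine ⟨υ, .seq h₁ k₁, fun i hi => ?_, fun r hr => ?_⟩
    · by_cases h : i.1 = j
      · subst h; exact k₂
      · rw [k₃ _ (by omega) (by omega), h₂ i (by omega)]
    · rw [k₃ r (by omega) (by omega), h₃ r hr]

theorem computes_comp {m n : ℕ} {f : List.Vector ℕ n →. ℕ} {g : Fin n → List.Vector ℕ m →. ℕ}
    (hf : Computes f) (hg : ∀ i, Computes (g i)) :
    Computes (fun v => (List.Vector.mOfFn fun i => g i v) >>= f) := by
  intro a o s ha ho hao
  obtain ⟨c, hc⟩ := computes_family hg a s ha n le_rfl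
  obtain ⟨d, hd⟩ := hf (fun i => s + i) o (s + n) (fun i => by omega) (by omega)
    (fun i => by omega)
  refine ⟨.seq c d, fun σ v y hv hy => ?_⟩
  obtain ⟨w, hw, hy⟩ := Part.mem_bind_iff.1 hy
  obtain ⟨τ, h₁, h₂, h₃⟩ := hc σ v w hv (mem_mOfFn _ _ hw)
  obtain ⟨υ, k₁, k₂, k₃⟩ := hd τ w y (fun i => h₂ i i.2) hy
  exact ⟨υ, .seq h₁ k₁, k₂, fun r hr hro => by rw [k₃ r (by omega) hro, h₃ r hr]⟩

/-- Primitive recursion. The loop runs once more than the recursion requires, so the register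
`s + 1` keeps the value before the last application of `g`. -/
theorem computes_prec {n : ℕ} {f : List.Vector ℕ n → ℕ} {g : List.Vector ℕ (n + 2) → ℕ}
    (hf : Computes (fun v => Part.some (f v))) (hg : Computes (fun v => Part.some (g v))) :
    Computes (fun v : List.Vector ℕ (n + 1) =>
      Part.some (v.head.rec (f v.tail) fun y IH => g (y ::ᵥ IH ::ᵥ v.tail))) := by
  intro a o s ha ho hao
  -- `s`: index, `s + 1`: previous value, `s + 2`: current value, `s + 3`: remaining iterations
  obtain ⟨c, hc⟩ := hf (fun i => a i.succ) (s + 2) (s + 5)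
    (fun i => by have := ha i.succ; omega) (by omega) (fun i => by have := ha i.succ; omega)
  obtain ⟨d, hd⟩ := hg (Fin.cons s (Fin.cons (s + 1) (fun i => a i.succ))) (s + 2) (s + 5)
    (fun i => by
      refine Fin.cases (by simp) (fun i => Fin.cases (by simp) (fun i => ?_) i) i
      have := ha i.succ
      simp only [Fin.cons_succ]; omega) (by omega)
    (fun i => by
      refine Fin.cases (by simp) (fun i => Fin.cases (by simp) (fun i => ?_) i) i
      have := ha i.succ
      simp only [Fin.cons_succ]; omega)
  have ha0 := ha 0
  let body : Cmd := .seq (.copy (s + 1) (s + 2) (s + 4)) <| .seq d <| .seq (.inc s) (.dec (s + 3))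
  have hbody : ∀ (σ : ℕ → ℕ) (v : List.Vector ℕ (n + 1)), (∀ i, σ (a i) = v.get i) →
      0 < σ (s + 3) → ∃ τ, Exec body σ τ ∧ (∀ r, r < s → τ r = σ r) ∧ τ s = σ s + 1 ∧
        τ (s + 1) = σ (s + 2) ∧ τ (s + 2) = g (σ s ::ᵥ σ (s + 2) ::ᵥ v.tail) ∧
        τ (s + 3) = σ (s + 3) - 1 := by
    intro σ v hv hpos
    have e₁ := exec_copy (o := s + 1) (a := s + 2) (t := s + 4) (by omega) (by omega) (by omega) σ
    set σ₁ := Function.update (Function.update σ (s + 4) 0) (s + 1) (σ (s + 2)) with hσ₁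
    have q : ∀ r, r ≠ s + 4 → r ≠ s + 1 → σ₁ r = σ r := by
      intro r h₁ h₂; simp [hσ₁, h₁, h₂]
    have q₁ : σ₁ (s + 1) = σ (s + 2) := by simp [hσ₁]
    obtain ⟨τ, h₁, h₂, h₃⟩ := hd σ₁ (σ s ::ᵥ σ (s + 2) ::ᵥ v.tail) _ (fun i => by
      refine Fin.cases ?_ (fun i => Fin.cases ?_ (fun i => ?_) i) i
      · simpa using q s (by omega) (by omega)
      · exact q₁
      · have := ha i.succ
        simp only [Fin.cons_succ, List.Vector.get_cons_succ, List.Vector.get_tail_succ]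
        rw [q _ (by omega) (by omega), hv]) (Part.mem_some _)
    have hpos' : τ (s + 3) = σ (s + 3) := by
      rw [h₃ _ (by omega) (by omega), q _ (by omega) (by omega)]
    refine ⟨_, .seq e₁ (.seq h₁ (.seq (.inc s τ) (.dec (s + 3) _ ?_))), ?_, ?_, ?_, ?_, ?_⟩
    · simp [hpos', hpos]
    · intro r hr
      have x₁ : r ≠ s + 3 := by omega
      simp only [Function.update_apply, x₁, hr.ne, if_false]
      rw [h₃ r (by omega) (by omega), q r (by omega) (by omega)]
    · simp [h₃ s (by omega) (by omega), q s (by omega) (by omega)]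
    · simp [h₃ (s + 1) (by omega) (by omega), q₁]
    · simp [h₂]
    · simp [hpos']
  have hloop : ∀ (k : ℕ) (σ : ℕ → ℕ) (v : List.Vector ℕ (n + 1)), (∀ i, σ (a i) = v.get i) →
      σ (s + 3) = k + 1 →
      σ (s + 2) = (σ s).rec (f v.tail) (fun y IH => g (y ::ᵥ IH ::ᵥ v.tail)) →
      ∃ τ, Exec (.loop (s + 3) body) σ τ ∧ (∀ r, r < s → τ r = σ r) ∧
        τ (s + 1) = (σ s + k).rec (f v.tail) (fun y IH => g (y ::ᵥ IH ::ᵥ v.tail)) := by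
    intro k
    induction k with
    | zero =>
      intro σ v hv h3 h2
      obtain ⟨τ, t₁, t₂, t₃, t₄, t₅, t₆⟩ := hbody σ v hv (by omega)
      exact ⟨τ, .loop_exit t₁ (by omega), t₂, by rw [t₄, h2]; rfl⟩
    | succ k ih =>
      intro σ v hv h3 h2
      obtain ⟨τ, t₁, t₂, t₃, t₄, t₅, t₆⟩ := hbody σ v hv (by omega)
      obtain ⟨υ, u₁, u₂, u₃⟩ := ih τ v (fun i => by rw [t₂ _ (ha i), hv]) (by omega)
        (by rw [t₅, t₃, h2])
      refine ⟨υ, .loop_again t₁ (by omega) u₁, fun r hr => by rw [u₂ r hr, t₂ r hr], ?_⟩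
      rw [u₃, t₃, show σ s + 1 + k = σ s + (k + 1) by omega]
  refine ⟨.seq c <| .seq (.copy (s + 3) (a 0) (s + 4)) <| .seq (.inc (s + 3)) <| .seq (.zero s) <|
    .seq (.loop (s + 3) body) (.copy o (s + 1) (s + 4)), fun σ v y hv hy => ?_⟩
  rw [Part.mem_some_iff] at hy
  obtain ⟨τ, h₁, h₂, h₃⟩ := hc σ v.tail _ (fun i => by rw [List.Vector.get_tail_succ, hv])
    (Part.mem_some _)
  have e₂ := exec_copy (o := s + 3) (a := a 0) (t := s + 4) (by omega) (by omega) (by omega) τ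
  have e₃ := Exec.seq e₂ (.seq (.inc (s + 3) _) (exec_zero s _))
  generalize hυ : Function.update (Function.update (Function.update (Function.update τ (s + 4) 0)
    (s + 3) (τ (a 0))) (s + 3) _) s 0 = υ at e₃
  have q : ∀ r, r ≠ s → r ≠ s + 3 → r ≠ s + 4 → υ r = τ r := by
    intro r h₁ h₂ h₃; simp [← hυ, h₁, h₂, h₃]
  have q' : ∀ r, r < s → υ r = σ r := fun r hr => by
    rw [q r (by omega) (by omega) (by omega), h₃ r (by omega) (by omega)]
  have qs : υ s = 0 := by simp [← hυ]
  have q3 : υ (s + 3) = v.head + 1 := by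
    simp [← hυ, h₃ (a 0) (by omega) (by omega), hv, List.Vector.get_zero]
  obtain ⟨ω, w₁, w₂, w₃⟩ := hloop v.head υ v (fun i => by rw [q' _ (ha i), hv]) q3
    (by rw [qs, q _ (by omega) (by omega) (by omega)]; exact h₂)
  have e₄ := exec_copy (o := o) (a := s + 1) (t := s + 4) (by omega) (by omega) (by omega) ω
  cases e₃ with
  | seq x₁ x₂ =>
    cases x₂ with
    | seq x₂ x₃ =>
      refine ⟨_, .seq h₁ (.seq x₁ (.seq x₂ (.seq x₃ (.seq w₁ e₄)))), ?_, ?_⟩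
      · simp [w₃, qs, hy]
      · intro r hr hro
        have : r ≠ s + 4 := by omega
        simp [hro, this, w₂ r hr, q' r hr]

/-- Unbounded search, for which the loop with the test at the end is exactly right. -/
theorem computes_rfind {n : ℕ} {f : List.Vector ℕ (n + 1) → ℕ}
    (hf : Computes (fun v => Part.some (f v))) :
    Computes (fun v : List.Vector ℕ n =>
      Nat.rfind fun k => Part.some (decide (f (k ::ᵥ v) = 0))) := by
  intro a o s ha ho hao
  -- `s`: candidate, `s + 1`: value of `f` at the previous candidate
  obtain ⟨c, hc⟩ := hf (Fin.cons s a) (s + 1) (s + 2)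
    (fun i => by
      refine Fin.cases (by simp) (fun i => ?_) i
      have := ha i
      simp only [Fin.cons_succ]; omega) (by omega)
    (fun i => by
      refine Fin.cases (by simp) (fun i => ?_) i
      have := ha i
      simp only [Fin.cons_succ]; omega)
  let body : Cmd := .seq c (.inc s)
  have hbody : ∀ (σ : ℕ → ℕ) (v : List.Vector ℕ n), (∀ i, σ (a i) = v.get i) →
      ∃ τ, Exec body σ τ ∧ (∀ r, r < s → τ r = σ r) ∧ τ s = σ s + 1 ∧
        τ (s + 1) = f (σ s ::ᵥ v) := by
    intro σ v hv
    obtain ⟨τ, h₁, h₂, h₃⟩ := hc σ (σ s ::ᵥ v) _ (fun i => by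
      refine Fin.cases (by simp) (fun i => ?_) i
      simpa using hv i) (Part.mem_some _)
    refine ⟨_, .seq h₁ (.inc s τ), fun r hr => ?_, ?_, ?_⟩
    · simp only [Function.update_apply, hr.ne, if_false]
      rw [h₃ r (by omega) (by omega)]
    · simp [h₃ s (by omega) (by omega)]
    · simp [h₂]
  have hloop : ∀ (k : ℕ) (σ : ℕ → ℕ) (v : List.Vector ℕ n), (∀ i, σ (a i) = v.get i) →
      f ((σ s + k) ::ᵥ v) = 0 → (∀ j, j < k → f ((σ s + j) ::ᵥ v) ≠ 0) →
      ∃ τ, Exec (.loop (s + 1) body) σ τ ∧ (∀ r, r < s → τ r = σ r) ∧ τ s = σ s + k + 1 := by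
    intro k
    induction k with
    | zero =>
      intro σ v hv h0 _
      obtain ⟨τ, t₁, t₂, t₃, t₄⟩ := hbody σ v hv
      exact ⟨τ, .loop_exit t₁ (by rw [t₄]; exact h0), t₂, t₃⟩
    | succ k ih =>
      intro σ v hv h0 hlt
      obtain ⟨τ, t₁, t₂, t₃, t₄⟩ := hbody σ v hv
      have sh : ∀ j, τ s + j = σ s + (j + 1) := fun j => by omega
      obtain ⟨υ, u₁, u₂, u₃⟩ := ih τ v (fun i => by rw [t₂ _ (ha i), hv]) (by rw [sh]; exact h0)
        (fun j hj => by rw [sh]; exact hlt _ (by omega))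
      exact ⟨υ, .loop_again t₁ (by rw [t₄]; exact hlt 0 (by omega)) u₁,
        fun r hr => by rw [u₂ r hr, t₂ r hr], by omega⟩
  refine ⟨.seq (.zero s) <| .seq (.loop (s + 1) body) <| .seq (.dec s) (.copy o s (s + 1)),
    fun σ v y hv hy => ?_⟩
  obtain ⟨hy₁, hy₂⟩ := Nat.mem_rfind.1 hy
  obtain ⟨τ, t₁, t₂, t₃⟩ := hloop y (Function.update σ s 0) v
    (fun i => by have := ha i; simp [(ha i).ne, hv]) (by simpa using hy₁)
    (fun j hj => by simpa using hy₂ hj)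
  simp only [Function.update_self, Nat.zero_add] at t₃
  refine ⟨_, .seq (exec_zero s σ) (.seq t₁ (.seq (.dec s τ (by omega))
    (exec_copy (o := o) (a := s) (t := s + 1) (by omega) (by omega) (by omega) _))), ?_, ?_⟩
  · simp [t₃]
  · intro r hr hro
    have : r ≠ s + 1 := by omega
    simp [hro, this, hr.ne, t₂ r hr]

theorem computes_of_primrec' {n : ℕ} {f : List.Vector ℕ n → ℕ} (hf : Nat.Primrec' f) :
    Computes (fun v => Part.some (f v)) := by
  induction hf with
  | zero => exact computes_zero
  | succ => exact computes_succ
  | get i => exact computes_get i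
  | comp g _ _ ihf ihg =>
    have := computes_comp ihf ihg
    simpa only [Vector.mOfFn_part_some, Part.bind_eq_bind, Part.bind_some] using this
  | prec _ _ ihf ihg => exact computes_prec ihf ihg

theorem computes_of_partrec' {n : ℕ} {f : List.Vector ℕ n →. ℕ} (hf : Nat.Partrec' f) :
    Computes f := by
  induction hf with
  | prim h => exact computes_of_primrec' h
  | comp g _ _ ihf ihg => exact computes_comp ihf ihg
  | rfind _ ih => exact computes_rfind ih

/-! ### Compilation to counter machines -/

/-- The instructions implementing a program, to be placed from location `p` on. All branch
instructions have equal targets, so the code is deterministic. -/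
def Cmd.compile : Cmd → ℕ → List Instr
  | .inc k, _ => [.inc k]
  | .dec k, _ => [.dec k]
  | .seq c d, p => c.compile p ++ d.compile (p + (c.compile p).length)
  | .loop k c, p => c.compile p ++ [.branch k p p]

theorem halt_not_mem_compile (c : Cmd) : ∀ p, Instr.halt ∉ c.compile p := by
  induction c with
  | inc k => simp [Cmd.compile]
  | dec k => simp [Cmd.compile]
  | seq c d ihc ihd => intro p; simp [Cmd.compile, ihc, ihd]
  | loop k c ih => intro p; simp [Cmd.compile, ih]

/-- The instruction list `L` occurs in `P` from location `p` on. -/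
def CodeAt (P : List Instr) (p : ℕ) (L : List Instr) : Prop :=
  ∀ i, i < L.length → P[p + i]? = L[i]?

theorem CodeAt.left {P : List Instr} {p : ℕ} {L L' : List Instr} (h : CodeAt P p (L ++ L')) :
    CodeAt P p L := by
  intro i hi
  rw [h i (by simp; omega), List.getElem?_append_left hi]

theorem CodeAt.right {P : List Instr} {p : ℕ} {L L' : List Instr} (h : CodeAt P p (L ++ L')) :
    CodeAt P (p + L.length) L' := by
  intro i hi
  rw [add_assoc, h _ (by simp; omega), List.getElem?_append_right (by omega)]
  simp

theorem CodeAt.single {P : List Instr} {p : ℕ} {a : Instr} {L : List Instr}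
    (h : CodeAt P p (a :: L)) : P[p]? = some a := by
  simpa using h 0 (by simp)

theorem codeAt_append (L₀ L L₁ : List Instr) : CodeAt (L₀ ++ (L ++ L₁)) L₀.length L := by
  intro i hi
  rw [List.getElem?_append_right (by omega), List.getElem?_append_left (by omega)]
  simp

theorem step_inc {M : CM} {p k : ℕ} (h : M.prog[p]? = some (.inc k)) (σ : ℕ → ℕ) (c : Config) :
    Step M ⟨p, σ⟩ c ↔ c = ⟨p + 1, Function.update σ k (σ k + 1)⟩ := by
  simp [Step, h]

theorem step_dec {M : CM} {p k : ℕ} (h : M.prog[p]? = some (.dec k)) (σ : ℕ → ℕ) (c : Config) :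
    Step M ⟨p, σ⟩ c ↔ 0 < σ k ∧ c = ⟨p + 1, Function.update σ k (σ k - 1)⟩ := by
  simp [Step, h]

theorem step_branch {M : CM} {p k i j : ℕ} (h : M.prog[p]? = some (.branch k i j)) (σ : ℕ → ℕ)
    (c : Config) : Step M ⟨p, σ⟩ c ↔
      (σ k ≠ 0 ∧ (c = ⟨i, σ⟩ ∨ c = ⟨j, σ⟩)) ∨ (σ k = 0 ∧ c = ⟨p + 1, σ⟩) := by
  simp [Step, h]

/-- `c'` is the only successor of `c`. -/
def DStep (M : CM) (c c' : Config) : Prop := ∀ c'', Step M c c'' ↔ c'' = c'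

theorem DStep.step {M : CM} {c c' : Config} (h : DStep M c c') : Step M c c' := (h c').2 rfl

/-- `c'` is reached from `c` through configurations with a unique successor. -/
abbrev DReach (M : CM) : Config → Config → Prop := Relation.ReflTransGen (DStep M)

theorem DReach.reach {M : CM} {c c' : Config} (h : DReach M c c') :
    Relation.ReflTransGen (Step M) c c' :=
  Relation.ReflTransGen.mono (fun _ _ h => h.step) _ _ h

theorem dstep_jump {M : CM} {p k i : ℕ} (h : M.prog[p]? = some (.branch k i i)) {σ : ℕ → ℕ}
    (hk : σ k ≠ 0) : DStep M ⟨p, σ⟩ ⟨i, σ⟩ := by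
  intro c
  simp [step_branch h, hk]

theorem dreach_of_exec {M : CM} {c : Cmd} {σ τ : ℕ → ℕ} (h : Exec c σ τ) :
    ∀ p, CodeAt M.prog p (c.compile p) → DReach M ⟨p, σ⟩ ⟨p + (c.compile p).length, τ⟩ := by
  induction h with
  | inc k σ => exact fun p hp => .single (step_inc hp.single σ)
  | dec k σ hk =>
    intro p hp
    refine .single fun c => ?_
    rw [step_dec hp.single]
    simp [hk, Cmd.compile]
  | seq _ _ ih₁ ih₂ =>
    intro p hp
    have := (ih₁ p hp.left).trans (ih₂ _ hp.right)
    simpa [Cmd.compile, add_assoc] using this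
  | @loop_exit k c σ τ _ hk ih =>
    intro p hp
    refine (ih p hp.left).tail fun c' => ?_
    rw [step_branch hp.right.single]
    simp [hk, Cmd.compile, add_assoc]
  | @loop_again k c σ τ υ _ hk _ ih₁ ih₂ =>
    intro p hp
    exact ((ih₁ p hp.left).tail (dstep_jump hp.right.single hk)).trans (ih₂ p hp)

/-- An infinite run cannot avoid a configuration that is reached deterministically. -/
theorem DReach.on_run {M : CM} {ρ : ℕ → Config} (hρ : IsInfRun M ρ) {c c' : Config}
    (h : DReach M c c') : ∀ k, ρ k = c → ∃ k', k ≤ k' ∧ ρ k' = c' := by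
  induction h with
  | refl => exact fun k hk => ⟨k, le_rfl, hk⟩
  | tail _ hs ih =>
    intro k hk
    obtain ⟨k', h₁, h₂⟩ := ih k hk
    refine ⟨k' + 1, by omega, ?_⟩
    rw [← hs, ← h₂]
    exact hρ.2 k'

/-! ### Concatenating finite computations -/

theorem exists_path {α : Type} {r : α → α → Prop} {a b : α} (h : Relation.ReflTransGen r a b) :
    ∃ (n : ℕ) (π : ℕ → α), π 0 = a ∧ π n = b ∧ ∀ i, i < n → r (π i) (π (i + 1)) := by
  induction h using Relation.ReflTransGen.head_induction_on with
  | refl => exact ⟨0, fun _ => b, rfl, rfl, by simp⟩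
  | @head a c hac _ ih =>
    obtain ⟨n, π, h₀, h₁, h₂⟩ := ih
    refine ⟨n + 1, fun i => Nat.casesOn i a π, rfl, h₁, fun i hi => ?_⟩
    cases i with
    | zero => simpa [h₀] using hac
    | succ i => exact h₂ i (by omega)

theorem exists_path_pos {α : Type} {r : α → α → Prop} {a b : α} (h : Relation.TransGen r a b) :
    ∃ (n : ℕ) (π : ℕ → α), 0 < n ∧ π 0 = a ∧ π n = b ∧ ∀ i, i < n → r (π i) (π (i + 1)) := by
  obtain ⟨c, hac, hcb⟩ := Relation.TransGen.head'_iff.1 h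
  obtain ⟨n, π, h₀, h₁, h₂⟩ := exists_path hcb
  refine ⟨n + 1, fun i => Nat.casesOn i a π, by omega, rfl, h₁, fun i hi => ?_⟩
  cases i with
  | zero => simpa [h₀] using hac
  | succ i => exact h₂ i (by omega)

/-- An infinite sequence of nonempty finite paths, each starting where the previous one ends, can be
traversed one step at a time. -/
theorem exists_run {α : Type} {r : α → α → Prop} (D : ℕ → α)
    (h : ∀ k, Relation.TransGen r (D k) (D (k + 1))) :
    ∃ ρ : ℕ → α, ρ 0 = D 0 ∧ (∀ t, r (ρ t) (ρ (t + 1))) ∧ ∀ k, ∃ t, k ≤ t ∧ ρ t = D k := by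
  choose n π hpos hπ₀ hπn hπ using fun k => exists_path_pos (h k)
  -- position `(k, j)` stands for the `j`-th point of the `k`-th path
  let next : ℕ × ℕ → ℕ × ℕ := fun q => if q.2 + 1 < n q.1 then (q.1, q.2 + 1) else (q.1 + 1, 0)
  let P : ℕ → ℕ × ℕ := fun t => next^[t] (0, 0)
  have hP : ∀ t, P (t + 1) = next (P t) := fun t => Function.iterate_succ_apply' _ _ _
  have hinv : ∀ t, (P t).2 < n (P t).1 := by
    intro t
    induction t with
    | zero => exact hpos 0
    | succ t ih =>
      rw [hP]
      by_cases hlt : (P t).2 + 1 < n (P t).1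
      · simp [next, hlt]
      · simpa [next, hlt] using hpos _
  refine ⟨fun t => π (P t).1 (P t).2, hπ₀ 0, fun t => ?_, fun k => ?_⟩
  · have hs := hπ _ _ (hinv t)
    change r (π (P t).1 (P t).2) (π (P (t + 1)).1 (P (t + 1)).2)
    rw [hP]
    by_cases hlt : (P t).2 + 1 < n (P t).1
    · simpa [next, hlt] using hs
    · have heq : (P t).2 + 1 = n (P t).1 := by have := hinv t; omega
      rw [heq, hπn] at hs
      simpa [next, hlt, hπ₀] using hs
  · suffices ∃ t, k ≤ t ∧ P t = (k, 0) by
      obtain ⟨t, h₁, h₂⟩ := this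
      exact ⟨t, h₁, by simp [h₂, hπ₀]⟩
    induction k with
    | zero => exact ⟨0, le_rfl, rfl⟩
    | succ k ih =>
      obtain ⟨t, h₁, h₂⟩ := ih
      have hj : ∀ j, j < n k → P (t + j) = (k, j) := by
        intro j
        induction j with
        | zero => intro _; exact h₂
        | succ j ihj =>
          intro hlt
          rw [← add_assoc, hP, ihj (by omega)]
          simp [next, hlt]
      have hk := hpos k
      refine ⟨t + (n k - 1) + 1, by omega, ?_⟩
      rw [hP, hj _ (by omega)]
      simp [next, show n k - 1 + 1 = n k by omega]

/-! ### The machine of the reduction -/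

/-- The tail of the main loop: `v₂ := v₄; v₃ := 0; v₀ := v₀ + 1`. -/
def closing : Cmd := .seq (.copy 2 4 5) (.seq (.zero 3) (.inc 0))

theorem exec_closing (σ : ℕ → ℕ) : ∃ τ, Exec closing σ τ ∧ τ 0 = σ 0 + 1 ∧ τ 1 = σ 1 ∧
    τ 2 = σ 4 ∧ τ 3 = 0 :=
  ⟨_, .seq (exec_copy (by omega) (by omega) (by omega) σ) (.seq (exec_zero 3 _) (.inc 0 _)),
    by simp⟩

/-- Location of the instruction `dec v₄` following the code of `c`. -/
def qLoc (c : Cmd) : ℕ := 5 + (c.compile 5).length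

/-- Location of the jump back to the head of the main loop. -/
def eLoc (c : Cmd) : ℕ := qLoc c + 1 + (closing.compile (qLoc c + 1)).length

/-- The part of the program that does not depend on the initial value of `v₂`. Locations 2 to 4
increment `v₃` a nondeterministically chosen number of times; then `c` runs, the computation gets
stuck if `c` produced `v₄ = 0`, and otherwise `v₂` becomes `v₄ - 1` and `v₀` is incremented.
Counter `v₁` has value 1 throughout, which makes `branch` on it an unconditional jump. -/
def mainCode (c : Cmd) : List Instr :=
  [.inc 1, .branch 1 (eLoc c + 2) (eLoc c + 2), .branch 1 3 5, .inc 3, .branch 1 2 2] ++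
    (c.compile 5 ++ ([.dec 4] ++ (closing.compile (qLoc c + 1) ++ [.branch 1 2 2, .halt])))

/-- The initialisation `v₂ := m`. It stands at the end of the program so that no jump target
depends on `m`. -/
def initCode (m : ℕ) : List Instr := List.replicate m (.inc 2) ++ [.branch 1 2 2]

/-- The machine of the reduction, with `K` counters. -/
def machine (K : ℕ) (c : Cmd) (m : ℕ) : CM := ⟨K, mainCode c ++ initCode m⟩

section Layout

variable (K : ℕ) (c : Cmd) (m : ℕ)

theorem machine_get_small (i : ℕ) (hi : i < 5) :
    (machine K c m).prog[i]? = [Instr.inc 1, .branch 1 (eLoc c + 2) (eLoc c + 2), .branch 1 3 5,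
      .inc 3, .branch 1 2 2][i]? := by
  simp only [machine, mainCode, List.append_assoc]
  rw [List.getElem?_append_left (by simpa using hi)]

theorem machine_code : CodeAt (machine K c m).prog 5 (c.compile 5) := by
  simp only [machine, mainCode, List.append_assoc]
  exact codeAt_append [_, _, _, _, _] _ _

theorem machine_code_rest : CodeAt (machine K c m).prog (qLoc c)
    ([.dec 4] ++ (closing.compile (qLoc c + 1) ++ [.branch 1 2 2, .halt])) := by
  have := codeAt_append ([.inc 1, .branch 1 (eLoc c + 2) (eLoc c + 2), .branch 1 3 5, .inc 3,
    .branch 1 2 2] ++ c.compile 5)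
    ([.dec 4] ++ (closing.compile (qLoc c + 1) ++ [.branch 1 2 2, .halt])) (initCode m)
  simp only [machine, mainCode, List.append_assoc, List.length_append] at this ⊢
  exact this

theorem machine_code_init : CodeAt (machine K c m).prog (eLoc c + 2) (initCode m) := by
  have := codeAt_append (mainCode c) (initCode m) []
  have hl : (mainCode c).length = eLoc c + 2 := by
    simp [mainCode, eLoc, qLoc]; omega
  rw [hl] at this
  simpa [machine] using this

end Layout

/-- The machine is at the head of its main loop, with `v₀ = j` and search state `v₂ = s`, and with
`v₁` and `v₃` ready for the next guess. -/
def AtHead (s j : ℕ) (C : Config) : Prop :=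
  C.loc = 2 ∧ C.cnt 0 = j ∧ C.cnt 1 = 1 ∧ C.cnt 2 = s ∧ C.cnt 3 = 0

theorem dreach_incs (M : CM) (p m : ℕ) (σ : ℕ → ℕ)
    (h : CodeAt M.prog p (List.replicate m (Instr.inc 2))) : ∀ i, i ≤ m →
    DReach M ⟨p, σ⟩ ⟨p + i, Function.update σ 2 (σ 2 + i)⟩ := by
  intro i
  induction i with
  | zero => intro _; simpa using Relation.ReflTransGen.refl
  | succ i ih =>
    intro hi
    refine (ih (by omega)).tail fun c => ?_
    rw [step_inc (k := 2)]
    · simp [add_assoc]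
    · rw [h i (by simp; omega)]
      simp [List.getElem?_replicate]; omega

theorem machine_init (K : ℕ) (c : Cmd) (m : ℕ) :
    ∃ C, AtHead m 0 C ∧ DReach (machine K c m) initConfig C := by
  have h₀ : (machine K c m).prog[0]? = some (.inc 1) := machine_get_small K c m 0 (by omega)
  have h₁ : (machine K c m).prog[1]? = some (.branch 1 (eLoc c + 2) (eLoc c + 2)) :=
    machine_get_small K c m 1 (by omega)
  have h₂ := machine_code_init K c m
  have s₀ : DReach (machine K c m) initConfig _ := .single (step_inc h₀ (fun _ => 0))
  have s₁ := s₀.tail (dstep_jump h₁ (by simp))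
  have s₂ := s₁.trans (dreach_incs _ _ m _ h₂.left m le_rfl)
  have h₃ := h₂.right.single
  rw [List.length_replicate] at h₃
  exact ⟨_, by simp [AtHead], s₂.tail (dstep_jump h₃ (by simp))⟩

/-- `c` computes `v₄ := g v₃ v₂`, leaving `v₀, …, v₃` unchanged. -/
def Implements (c : Cmd) (g : ℕ → ℕ → ℕ) : Prop :=
  ∀ σ, ∃ τ, Exec c σ τ ∧ τ 4 = g (σ 3) (σ 2) ∧ ∀ r, r < 4 → τ r = σ r

theorem machine_compute (K : ℕ) {c : Cmd} {g : ℕ → ℕ → ℕ} (hc : Implements c g) (m : ℕ)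
    (σ : ℕ → ℕ) : ∃ τ, DReach (machine K c m) ⟨5, σ⟩ ⟨qLoc c, τ⟩ ∧ τ 4 = g (σ 3) (σ 2) ∧
      ∀ r, r < 4 → τ r = σ r := by
  obtain ⟨τ, h₁, h₂⟩ := hc σ
  exact ⟨τ, dreach_of_exec h₁ 5 (machine_code K c m), h₂⟩

theorem machine_dec (K : ℕ) (c : Cmd) (m : ℕ) (σ : ℕ → ℕ) (C : Config) :
    Step (machine K c m) ⟨qLoc c, σ⟩ C ↔
      0 < σ 4 ∧ C = ⟨qLoc c + 1, Function.update σ 4 (σ 4 - 1)⟩ :=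
  step_dec (machine_code_rest K c m).left.single σ C

theorem machine_close (K : ℕ) (c : Cmd) (m : ℕ) (σ : ℕ → ℕ) (h1 : σ 1 = 1) :
    ∃ C, DReach (machine K c m) ⟨qLoc c + 1, σ⟩ C ∧ AtHead (σ 4) (σ 0 + 1) C := by
  obtain ⟨τ, h, t₀, t₁, t₂, t₃⟩ := exec_closing σ
  have hcode := (machine_code_rest K c m).right
  refine ⟨⟨2, τ⟩, (dreach_of_exec h _ hcode.left).tail (dstep_jump hcode.right.single ?_), ?_⟩
  · omega
  · exact ⟨rfl, t₀, t₁.trans h1, t₂, t₃⟩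

theorem machine_guess (K : ℕ) (c : Cmd) (m : ℕ) (σ : ℕ → ℕ) (h1 : σ 1 = 1) (h3 : σ 3 = 0) (x : ℕ) :
    Relation.TransGen (Step (machine K c m)) ⟨2, σ⟩ ⟨5, Function.update σ 3 x⟩ := by
  have g₂ : (machine K c m).prog[2]? = some (.branch 1 3 5) := machine_get_small K c m 2 (by omega)
  have g₃ : (machine K c m).prog[3]? = some (.inc 3) := machine_get_small K c m 3 (by omega)
  have g₄ : (machine K c m).prog[4]? = some (.branch 1 2 2) := machine_get_small K c m 4 (by omega)
  have main : Relation.ReflTransGen (Step (machine K c m)) ⟨2, σ⟩ ⟨2, Function.update σ 3 x⟩ := by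
    induction x with
    | zero => simpa [← h3] using Relation.ReflTransGen.refl
    | succ x ih =>
      refine ((ih.tail (b := ⟨2, Function.update σ 3 x⟩) (c := ⟨3, Function.update σ 3 x⟩) ?_).tail
        (c := ⟨4, Function.update σ 3 (x + 1)⟩) ?_).tail ?_
      · rw [step_branch g₂]; simp [h1]
      · rw [step_inc g₃]; simp
      · rw [step_branch g₄]; simp [h1]
  refine Relation.TransGen.tail' main ?_
  rw [step_branch g₂]; simp [h1]

/-- An infinite run incrementing `v₀` infinitely often leaves the guessing loop, because that loop
does not touch `v₀`. -/
theorem machine_guess_exit {K : ℕ} {c : Cmd} {m : ℕ} {ρ : ℕ → Config}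
    (hρ : IsInfRun (machine K c m) ρ)
    (hinf : ∀ m : ℕ, ∃ k, m ≤ k ∧ (ρ k).cnt 0 < (ρ (k + 1)).cnt 0) (σ : ℕ → ℕ) (h1 : σ 1 = 1)
    (k : ℕ) (hk : ρ k = ⟨2, σ⟩) : ∃ k' x, k ≤ k' ∧ ρ k' = ⟨5, Function.update σ 3 x⟩ := by
  have g₂ : (machine K c m).prog[2]? = some (.branch 1 3 5) := machine_get_small K c m 2 (by omega)
  have g₃ : (machine K c m).prog[3]? = some (.inc 3) := machine_get_small K c m 3 (by omega)
  have g₄ : (machine K c m).prog[4]? = some (.branch 1 2 2) := machine_get_small K c m 4 (by omega)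
  by_contra hcon
  push Not at hcon
  have hin : ∀ t, ∃ x, ρ (k + t) = ⟨2, Function.update σ 3 x⟩ ∨
      ρ (k + t) = ⟨3, Function.update σ 3 x⟩ ∨ ρ (k + t) = ⟨4, Function.update σ 3 x⟩ := by
    intro t
    induction t with
    | zero => exact ⟨σ 3, .inl (by simpa using hk)⟩
    | succ t ih =>
      obtain ⟨x, h⟩ := ih
      have hs := hρ.2 (k + t)
      rw [← add_assoc]
      have hne := hcon (k + t + 1) x (by omega)
      rcases h with h | h | h <;> rw [h] at hs
      · rw [step_branch g₂] at hs
        simp only [ne_eq, show (1 : ℕ) ≠ 3 by omega, not_false_eq_true,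
          Function.update_of_ne, h1] at hs
        refine ⟨x, .inr (.inl ?_)⟩
        simpa [hne] using hs
      · rw [step_inc g₃] at hs
        exact ⟨x + 1, .inr (.inr (by simpa using hs))⟩
      · rw [step_branch g₄] at hs
        exact ⟨x, .inl (by simpa [h1] using hs)⟩
  have hconst : ∀ t, (ρ (k + t)).cnt 0 = σ 0 := by
    intro t
    obtain ⟨x, h | h | h⟩ := hin t <;> rw [h] <;> simp
  obtain ⟨k', hk', hlt⟩ := hinf k
  have e₁ := hconst (k' - k)
  have e₂ := hconst (k' + 1 - k)
  rw [show k + (k' - k) = k' by omega] at e₁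
  rw [show k + (k' + 1 - k) = k' + 1 by omega] at e₂
  omega

/-- One round of the main loop, seen from an infinite run. -/
theorem machine_round {K : ℕ} {c : Cmd} {g : ℕ → ℕ → ℕ} (hc : Implements c g) {m : ℕ}
    {ρ : ℕ → Config} (hρ : IsInfRun (machine K c m) ρ)
    (hinf : ∀ m : ℕ, ∃ k, m ≤ k ∧ (ρ k).cnt 0 < (ρ (k + 1)).cnt 0) {s : ℕ}
    (h : ∃ k j, AtHead s j (ρ k)) :
    ∃ x s', g x s = s' + 1 ∧ ∃ k j, AtHead s' j (ρ k) := by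
  obtain ⟨k, j, a₁, a₂, a₃, a₄, a₅⟩ := h
  generalize hσ : (ρ k).cnt = σ at *
  have hk : ρ k = ⟨2, σ⟩ := by rw [← hσ, ← a₁]
  obtain ⟨k₁, x, -, h₁⟩ := machine_guess_exit hρ hinf σ a₃ k hk
  obtain ⟨τ, t₁, t₂, t₃⟩ := machine_compute K hc m (Function.update σ 3 x)
  obtain ⟨k₂, -, h₂⟩ := t₁.on_run hρ k₁ h₁
  have hs := hρ.2 k₂
  rw [h₂, machine_dec] at hs
  have hτ1 : τ 1 = 1 := by rw [t₃ 1 (by omega)]; simpa using a₃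
  obtain ⟨C, c₁, c₂⟩ := machine_close K c m (Function.update τ 4 (τ 4 - 1)) (by simpa using hτ1)
  obtain ⟨k₃, -, h₃⟩ := c₁.on_run hρ _ hs.2
  refine ⟨x, τ 4 - 1, ?_, k₃, τ 0 + 1, ?_⟩
  · have := hs.1
    simp only [Function.update_self, ne_eq, show (2 : ℕ) ≠ 3 by omega, not_false_eq_true,
      Function.update_of_ne, a₄] at t₂
    omega
  · rw [h₃]; simpa using c₂

/-- One round of the main loop, with a prescribed guess. -/
theorem machine_round' (K : ℕ) {c : Cmd} {g : ℕ → ℕ → ℕ} (hc : Implements c g) (m : ℕ)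
    {x s s' j : ℕ} (hg : g x s = s' + 1) {C : Config} (h : AtHead s j C) :
    ∃ C', Relation.TransGen (Step (machine K c m)) C C' ∧ AtHead s' (j + 1) C' := by
  obtain ⟨l, σ⟩ := C
  obtain ⟨rfl, a₂, a₃, a₄, a₅⟩ : l = 2 ∧ σ 0 = j ∧ σ 1 = 1 ∧ σ 2 = s ∧ σ 3 = 0 := h
  have h₁ := machine_guess K c m σ a₃ a₅ x
  obtain ⟨τ, t₁, t₂, t₃⟩ := machine_compute K hc m (Function.update σ 3 x)
  have ht4 : τ 4 = s' + 1 := by simpa [a₄, hg] using t₂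
  have ht0 : τ 0 = j := by rw [t₃ 0 (by omega)]; simpa using a₂
  have ht1 : τ 1 = 1 := by rw [t₃ 1 (by omega)]; simpa using a₃
  have h₂ := (machine_dec K c m τ _).2 ⟨by omega, rfl⟩
  obtain ⟨C', c₁, c₂⟩ := machine_close K c m (Function.update τ 4 (τ 4 - 1)) (by simpa using ht1)
  refine ⟨C', ((h₁.trans_left t₁.reach).tail h₂).trans_left c₁.reach, ?_⟩
  simpa [ht4, ht0] using c₂

/-- The machine increments `v₀` infinitely often on some run iff there is an infinite sequence of
guesses on which `g` never returns `0`. -/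
theorem machine_spec (K : ℕ) {c : Cmd} {g : ℕ → ℕ → ℕ} (hc : Implements c g) (m : ℕ) :
    (∃ ρ : ℕ → Config, IsInfRun (machine K c m) ρ ∧
      ∀ m : ℕ, ∃ k, m ≤ k ∧ (ρ k).cnt 0 < (ρ (k + 1)).cnt 0) ↔
    ∃ x S : ℕ → ℕ, S 0 = m ∧ ∀ k, g (x k) (S k) = S (k + 1) + 1 := by
  constructor
  · rintro ⟨ρ, hρ, hinf⟩
    obtain ⟨C, hC, hreach⟩ := machine_init K c m
    obtain ⟨k₀, -, hk₀⟩ := hreach.on_run hρ 0 hρ.1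
    choose X Y hg hY using fun p : {s // ∃ k j, AtHead s j (ρ k)} => machine_round hc hρ hinf p.2
    let T : ℕ → {s // ∃ k j, AtHead s j (ρ k)} :=
      fun k => (fun p => ⟨Y p, hY p⟩)^[k] ⟨m, k₀, 0, hk₀ ▸ hC⟩
    refine ⟨fun k => X (T k), fun k => (T k).1, rfl, fun k => ?_⟩
    have : T (k + 1) = ⟨Y (T k), hY (T k)⟩ := Function.iterate_succ_apply' _ _ _
    change g (X (T k)) (T k).1 = (T (k + 1)).1 + 1
    rw [this]
    exact hg (T k)
  · rintro ⟨x, S, hS, hg⟩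
    obtain ⟨C₀, hC₀, hreach⟩ := machine_init K c m
    choose N hN₁ hN₂ using fun (k : ℕ) (p : {C // AtHead (S k) k C}) =>
      machine_round' K hc m (hg k) p.2
    let T : ∀ k, {C // AtHead (S k) k C} :=
      fun k => Nat.rec ⟨C₀, hS ▸ hC₀⟩ (fun k p => ⟨N k p, hN₂ k p⟩) k
    have hstart : Relation.TransGen (Step (machine K c m)) initConfig C₀ := by
      rcases Relation.reflTransGen_iff_eq_or_transGen.1 hreach.reach with h | h
      · have := hC₀.1
        rw [h] at this
        simp [initConfig] at this
      · exact h
    obtain ⟨ρ, h₀, hstep, hvisit⟩ := exists_run (r := Step (machine K c m))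
      (fun k => Nat.casesOn k initConfig fun k => (T k).1) (fun k => by
        cases k with
        | zero => exact hstart
        | succ k => exact hN₁ k (T k))
    refine ⟨ρ, ⟨h₀, hstep⟩, ?_⟩
    by_contra hcon
    push Not at hcon
    obtain ⟨t₀, hle⟩ := hcon
    have hmono : ∀ t, (ρ (t₀ + t)).cnt 0 ≤ (ρ t₀).cnt 0 := by
      intro t
      induction t with
      | zero => exact le_rfl
      | succ t ih => exact (hle (t₀ + t) (by omega)).trans ih
    -- `v₀` has value `k` at the `k`-th visit to the head, which takes place after time `t₀`
    let k := t₀ + (ρ t₀).cnt 0 + 1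
    obtain ⟨t, ht, hval⟩ := hvisit (k + 1)
    have h₁ := hmono (t - t₀)
    rw [show t₀ + (t - t₀) = t by omega, hval] at h₁
    have h₂ : (T k).1.cnt 0 = k := (T k).2.2.1
    have h₃ : (T k).1.cnt 0 ≤ (ρ t₀).cnt 0 := h₁
    omega

/-! ### Well-formedness, coding, and the reduction -/

theorem machine_wellFormed {K : ℕ} (c : Cmd) (hK : 2 < K)
    (h : ∀ i ∈ mainCode c, ∀ k ∈ i.counters, k < K) (m : ℕ) : (machine K c m).WellFormed := by
  constructor
  · intro i hi k hk
    rcases List.mem_append.1 hi with hi | hi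
    · exact h i hi k hk
    · simp only [initCode, List.mem_append, List.mem_replicate, List.mem_singleton] at hi
      change k < K
      rcases hi with ⟨-, rfl⟩ | rfl <;> simp only [Instr.counters, List.mem_singleton] at hk <;>
        omega
  · have h₁ := List.count_eq_zero.2 (halt_not_mem_compile c 5)
    have h₂ := List.count_eq_zero.2 (halt_not_mem_compile closing (qLoc c + 1))
    simp [machine, mainCode, initCode, List.count_append, h₁, h₂,
      List.count_replicate]

theorem exists_counter_bound (L : List Instr) : ∃ K, ∀ i ∈ L, ∀ k ∈ i.counters, k < K := by
  refine ⟨(L.flatMap Instr.counters).sum + 1, fun i hi k hk => ?_⟩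
  exact Nat.lt_succ_of_le (List.single_le_sum (by simp) _ (List.mem_flatMap.2 ⟨i, hi, hk⟩))

theorem Instr.code_injective : Function.Injective Instr.code := by
  intro a b h
  cases a <;> cases b <;> simp_all [Instr.code, Nat.pair_eq_pair]

theorem listCode_injective : Function.Injective listCode := by
  intro l
  induction l with
  | nil => intro l' h; cases l' <;> simp_all [listCode]
  | cons a l ih =>
    intro l' h
    cases l' with
    | nil => simp [listCode] at h
    | cons b l' =>
      simp only [listCode, Nat.add_right_cancel_iff, Nat.pair_eq_pair] at h
      rw [h.1, ih h.2]

theorem CM.code_injective : Function.Injective CM.code := by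
  rintro ⟨K, P⟩ ⟨K', P'⟩ h
  simp only [CM.code, Nat.pair_eq_pair] at h
  rw [h.1, Instr.code_injective.list_map (listCode_injective h.2)]

theorem listCode_append_computable {f : ℕ → List ℕ} (hf : Computable fun m => listCode (f m)) :
    ∀ L : List ℕ, Computable fun m => listCode (L ++ f m)
  | [] => hf
  | a :: L => Computable.succ.comp (Primrec₂.natPair.to_comp.comp (Computable.const a)
      (listCode_append_computable hf L))

theorem iterate_pair_computable (a b : ℕ) :
    Computable fun m : ℕ => (Nat.rec b (fun _ ih => Nat.pair a ih + 1) m : ℕ) :=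
  Computable.nat_rec (h := fun _ q => Nat.pair a q.2 + 1) Computable.id (Computable.const b)
    (Computable.succ.comp (Primrec₂.natPair.to_comp.comp (Computable.const a)
      (Computable.snd.comp Computable.snd)))

theorem machine_code_computable (K : ℕ) (c : Cmd) :
    Computable fun m => (machine K c m).code := by
  have h₁ : Computable fun m => listCode ((initCode m).map Instr.code) := by
    refine (iterate_pair_computable (Instr.code (.inc 2))
      (listCode [Instr.code (.branch 1 2 2)])).of_eq fun m => ?_
    induction m with
    | zero => rfl
    | succ m ih =>
      simp only [initCode, List.replicate_succ, List.cons_append, List.map_cons, listCode] at ih ⊢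
      rw [← ih]
  refine (Primrec₂.natPair.to_comp.comp (Computable.const K)
    (listCode_append_computable h₁ ((mainCode c).map Instr.code))).of_eq fun m => ?_
  simp [CM.code, machine]

theorem exists_implements {g : ℕ → ℕ → ℕ} (hg : Computable₂ g) : ∃ c, Implements c g := by
  have h := computes_of_partrec' (Nat.Partrec'.part_iff₂.2 hg.partrec₂)
  obtain ⟨c, hc⟩ := h ![3, 2] 4 5 (by decide) (by decide) (by decide)
  refine ⟨c, fun σ => ?_⟩
  obtain ⟨τ, h₁, h₂, h₃⟩ := hc σ (σ 3 ::ᵥ σ 2 ::ᵥ List.Vector.nil) (g (σ 3) (σ 2))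
    (fun i => by fin_cases i <;> rfl) (by simp)
  exact ⟨τ, h₁, h₂, fun r hr => h₃ r (by omega) (by omega)⟩

/-- The step function of the search for a witness: `s` encodes the input together with the reversed
list of the values guessed so far; the guess `x` is appended if the relation `R` accepts the
longer list, and `0` signals rejection. -/
def extend (R : ℕ → List ℕ → Bool) (x s : ℕ) : ℕ :=
  bif R (Denumerable.ofNat (ℕ × List ℕ) s).1
      (x :: (Denumerable.ofNat (ℕ × List ℕ) s).2).reverse then
    Encodable.encode ((Denumerable.ofNat (ℕ × List ℕ) s).1,
      x :: (Denumerable.ofNat (ℕ × List ℕ) s).2) + 1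
  else 0

theorem extend_computable {R : ℕ → List ℕ → Bool}
    (hR : Computable (fun p : ℕ × List ℕ => R p.1 p.2)) : Computable₂ (extend R) := by
  have hs : Computable fun q : ℕ × ℕ => Denumerable.ofNat (ℕ × List ℕ) q.2 :=
    (Computable.ofNat _).comp Computable.snd
  have hl : Computable fun q : ℕ × ℕ => q.1 :: (Denumerable.ofNat (ℕ × List ℕ) q.2).2 :=
    Computable.list_cons.comp Computable.fst (Computable.snd.comp hs)
  have hn := Computable.fst.comp hs
  exact Computable.cond (hR.comp (hn.pair (Computable.list_reverse.comp hl)))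
    (Computable.succ.comp (Computable.encode.comp (hn.pair hl))) (Computable.const 0)

theorem extend_encode (R : ℕ → List ℕ → Bool) (n x : ℕ) (l : List ℕ) :
    extend R x (Encodable.encode (n, l)) =
      bif R n (x :: l).reverse then Encodable.encode (n, x :: l) + 1 else 0 := by
  simp only [extend, Denumerable.ofNat_encode]

theorem exists_witness_iff (R : ℕ → List ℕ → Bool) (n : ℕ) :
    (∃ f : ℕ → ℕ, ∀ k, R n ((List.range (k + 1)).map f) = true) ↔
    ∃ x S : ℕ → ℕ, S 0 = Encodable.encode (n, ([] : List ℕ)) ∧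
      ∀ k, extend R (x k) (S k) = S (k + 1) + 1 := by
  have hrev : ∀ (f : ℕ → ℕ) k, (f k :: ((List.range k).map f).reverse).reverse =
      (List.range (k + 1)).map f := by
    intro f k; simp [List.range_succ]
  have hrev' : ∀ (f : ℕ → ℕ) k, f k :: ((List.range k).map f).reverse =
      ((List.range (k + 1)).map f).reverse := by
    intro f k; simp [List.range_succ]
  constructor
  · rintro ⟨f, hf⟩
    refine ⟨f, fun k => Encodable.encode (n, ((List.range k).map f).reverse), by simp, fun k => ?_⟩
    rw [extend_encode, hrev, hf, cond_true, hrev']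
  · rintro ⟨x, S, h₀, hS⟩
    have key : ∀ k, S k = Encodable.encode (n, ((List.range k).map x).reverse) →
        R n ((List.range (k + 1)).map x) = true ∧
        S (k + 1) = Encodable.encode (n, ((List.range (k + 1)).map x).reverse) := by
      intro k hk
      have := hS k
      rw [hk, extend_encode, hrev, hrev'] at this
      cases hR : R n ((List.range (k + 1)).map x) with
      | false => simp [hR] at this
      | true =>
        rw [hR, cond_true] at this
        exact ⟨rfl, by omega⟩
    have hall : ∀ k, S k = Encodable.encode (n, ((List.range k).map x).reverse) := by
      intro k
      induction k with
      | zero => simpa using h₀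
      | succ k ih => exact (key k ih).2
    exact ⟨x, fun k => (key k (hall k)).1⟩

/-- **Theorem 1, third part.** The unbounded counter problem is Σ¹₁-hard. -/
theorem stmt8 : ∀ A : Set ℕ, Sigma11 A → ManyOneRed A UCset := by
  rintro A ⟨R, hR, hA⟩
  obtain ⟨c, hc⟩ := exists_implements (extend_computable hR)
  obtain ⟨K₀, hK₀⟩ := exists_counter_bound (mainCode c)
  let K := K₀ + 3
  have hK : ∀ i ∈ mainCode c, ∀ k ∈ i.counters, k < K := fun i hi k hk => by
    have := hK₀ i hi k hk; omega
  refine ⟨fun n => (machine K c (Encodable.encode (n, ([] : List ℕ)))).code,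
    (machine_code_computable K c).comp
      (Computable.encode.comp (Computable.id.pair (Computable.const []))), fun n => ?_⟩
  rw [hA, exists_witness_iff, ← machine_spec K hc]
  constructor
  · intro h
    exact ⟨_, rfl, machine_wellFormed c (by omega) hK _, show 2 ≤ K by omega, h⟩
  · rintro ⟨M, hM, -, -, h⟩
    rwa [← CM.code_injective hM] at h
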